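/- Let H₀, H₁ be complex Hilbert spaces, K := H₀ ⊕ H₁ with Δ the orthogonal projection of K onto H₁, and L ∈ B(H₀; H₁). For h > 0, let V_{√hL} := [[(I + hL*L)^{-1/2}, −√h·L*(I + hLL*)^{-1/2}], [√h·L(I + hL*L)^{-1/2}, (I + hLL*)^{-1/2}]], where the inverse square roots are given by the continuous functional calculus. Then ‖s_h(V_{√hL} − I) − F_{0,L,I}‖ → 0 as h → 0, where s_h(T) := S_h T S_h with S_h := h^{-1/2}(I − Δ) + Δ, and F_{0,L,I} = [[−½L*L, −L*], [L, 0]]. Equivalently, in block form: h^{-1}((I + hL*L)^{-1/2} − I) → −½L*L, L(I + hL*L)^{-1/2} → L, L*(I + hLL*)^{-1/2} → L*, and (I + hLL*)^{-1/2} → I, all in operator norm as h → 0. -/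

import Mathlib

open ContinuousLinearMap

noncomputable section

variable (H₀ H₁ : Type*) [NormedAddCommGroup H₀] [InnerProductSpace ℂ H₀] [CompleteSpace H₀]
  [NormedAddCommGroup H₁] [InnerProductSpace ℂ H₁] [CompleteSpace H₁]

/-- The inclusion `H₀ → H₀ ⊕ H₁` (Hilbert-space direct sum). -/
def inl0 : H₀ →L[ℂ] WithLp 2 (H₀ × H₁) :=
  ((WithLp.prodContinuousLinearEquiv 2 ℂ H₀ H₁).symm : H₀ × H₁ →L[ℂ] WithLp 2 (H₀ × H₁)) ∘L
    ContinuousLinearMap.inl ℂ H₀ H₁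

/-- The inclusion `H₁ → H₀ ⊕ H₁`. -/
def inr1 : H₁ →L[ℂ] WithLp 2 (H₀ × H₁) :=
  ((WithLp.prodContinuousLinearEquiv 2 ℂ H₀ H₁).symm : H₀ × H₁ →L[ℂ] WithLp 2 (H₀ × H₁)) ∘L
    ContinuousLinearMap.inr ℂ H₀ H₁

/-- The projection `H₀ ⊕ H₁ → H₀`. -/
def fst0 : WithLp 2 (H₀ × H₁) →L[ℂ] H₀ :=
  ContinuousLinearMap.fst ℂ H₀ H₁ ∘L
    ((WithLp.prodContinuousLinearEquiv 2 ℂ H₀ H₁) : WithLp 2 (H₀ × H₁) →L[ℂ] H₀ × H₁)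

/-- The projection `H₀ ⊕ H₁ → H₁`. -/
def snd1 : WithLp 2 (H₀ × H₁) →L[ℂ] H₁ :=
  ContinuousLinearMap.snd ℂ H₀ H₁ ∘L
    ((WithLp.prodContinuousLinearEquiv 2 ℂ H₀ H₁) : WithLp 2 (H₀ × H₁) →L[ℂ] H₀ × H₁)

variable {H₀ H₁}

/-- The block operator `[[A, C], [B, D]]` on `H₀ ⊕ H₁`. -/
def blk (A : H₀ →L[ℂ] H₀) (C : H₁ →L[ℂ] H₀) (B : H₀ →L[ℂ] H₁) (D : H₁ →L[ℂ] H₁) :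
    WithLp 2 (H₀ × H₁) →L[ℂ] WithLp 2 (H₀ × H₁) :=
  inl0 H₀ H₁ ∘L A ∘L fst0 H₀ H₁ + inl0 H₀ H₁ ∘L C ∘L snd1 H₀ H₁ +
    inr1 H₀ H₁ ∘L B ∘L fst0 H₀ H₁ + inr1 H₀ H₁ ∘L D ∘L snd1 H₀ H₁

/-- `Δ`, the orthogonal projection of `H₀ ⊕ H₁` onto `H₁`. -/
def projR : WithLp 2 (H₀ × H₁) →L[ℂ] WithLp 2 (H₀ × H₁) :=
  inr1 H₀ H₁ ∘L snd1 H₀ H₁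

/-- The series product `F₁ ◁ F₂ = F₁ + F₂ + F₁ Δ F₂` on `B(H₀ ⊕ H₁)`. -/
def seriesProd (F₁ F₂ : WithLp 2 (H₀ × H₁) →L[ℂ] WithLp 2 (H₀ × H₁)) :
    WithLp 2 (H₀ × H₁) →L[ℂ] WithLp 2 (H₀ × H₁) :=
  F₁ + F₂ + F₁ * projR * F₂

/-- `F_{Z,L,W} = [[Z - ½L*L, -L*W], [L, W - 1]]`. -/
def FZLW (Z : H₀ →L[ℂ] H₀) (L : H₀ →L[ℂ] H₁) (W : H₁ →L[ℂ] H₁) :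
    WithLp 2 (H₀ × H₁) →L[ℂ] WithLp 2 (H₀ × H₁) :=
  blk (Z - (2 : ℂ)⁻¹ • (adjoint L ∘L L)) (-(adjoint L ∘L W)) L (W - 1)

open Filter Topology

/-- The operator `S_h = h^{-1/2}(I - Δ) + Δ` on `H₀ ⊕ H₁`. -/
def scaleOp (h : ℝ) : WithLp 2 (H₀ × H₁) →L[ℂ] WithLp 2 (H₀ × H₁) :=
  ((Real.sqrt h : ℂ))⁻¹ • (1 - projR) + projR

/-- The scaling map `s_h(T) = S_h T S_h`. -/
def scal (h : ℝ) (T : WithLp 2 (H₀ × H₁) →L[ℂ] WithLp 2 (H₀ × H₁)) :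
    WithLp 2 (H₀ × H₁) →L[ℂ] WithLp 2 (H₀ × H₁) :=
  scaleOp h * T * scaleOp h

/-- The inverse square root `(1 + S)^{-1/2}` of `1 + S` for a positive operator `S`,
given by applying `x ↦ (1 + x)^{-1/2}` to `S` via the continuous functional calculus. -/
def invSqrtOnePlus {K : Type*} [NormedAddCommGroup K] [InnerProductSpace ℂ K] [CompleteSpace K]
    (S : K →L[ℂ] K) : K →L[ℂ] K :=
  cfc (fun x : ℝ => (1 + x) ^ (-(1 / 2 : ℝ))) S

/-- The block operator `V_{√h L}`. -/
def VLh (h : ℝ) (L : H₀ →L[ℂ] H₁) : WithLp 2 (H₀ × H₁) →L[ℂ] WithLp 2 (H₀ × H₁) :=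
  blk (invSqrtOnePlus ((h : ℂ) • (adjoint L ∘L L)))
    (-((Real.sqrt h : ℂ) • (adjoint L ∘L invSqrtOnePlus ((h : ℂ) • (L ∘L adjoint L)))))
    ((Real.sqrt h : ℂ) • (L ∘L invSqrtOnePlus ((h : ℂ) • (adjoint L ∘L L))))
    (invSqrtOnePlus ((h : ℂ) • (L ∘L adjoint L)))

/-!
If `f` is differentiable at `0` and continuous nearby, then `cfc f` is differentiable at `0` along
the elements to which the functional calculus applies: the spectrum of `a` lies in the ball of
radius `‖a‖`, so the operator Taylor remainder is bounded by the scalar one. Applied to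
`x ↦ (1 + x) ^ (-1/2)` this gives `(1 + hS)^{-1/2} = 1 - hS/2 + o(h)` for self-adjoint `S`.

Since `S_h` is the diagonal block operator with entries `h^{-1/2}` and `1`, the scaling map cancels
the factors `√h` in the off-diagonal blocks of `V_{√hL}` and turns its upper left block minus `1`
into a difference quotient, whose limit is `-½L*L`.
-/

section FunctionalCalculus

variable {𝕜 A : Type*} {p : A → Prop} [RCLike 𝕜] [NormedRing A] [StarRing A] [NormedAlgebra 𝕜 A]
  [IsometricContinuousFunctionalCalculus 𝕜 A p]

lemma norm_le_norm_of_mem_spectrum_of_predicate {a : A} (ha : p a) {x : 𝕜} (hx : x ∈ spectrum 𝕜 a) :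
    ‖x‖ ≤ ‖a‖ := by
  simpa only [id_eq, cfc_id 𝕜 a] using norm_apply_le_norm_cfc id a hx

lemma hasFDerivWithinAt_cfc_zero {f : 𝕜 → 𝕜} {f' : 𝕜} (hf : HasDerivAt f f' 0)
    (hcont : ∀ᶠ x in 𝓝 0, ContinuousAt f x) :
    HasFDerivWithinAt (cfc f : A → A) (f' • ContinuousLinearMap.id 𝕜 A) {a | p a} 0 := by
  refine .of_isLittleO (Asymptotics.isLittleO_iff.mpr fun ε hε ↦ ?_)
  obtain ⟨δ, hδ, hball⟩ := Metric.eventually_nhds_iff_ball.mp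
    (hcont.and (Asymptotics.isLittleO_iff.mp hf.isLittleO hε))
  filter_upwards [nhdsWithin_le_nhds (Metric.ball_mem_nhds (0 : A) hδ), self_mem_nhdsWithin]
    with a ha_ball (ha : p a)
  have hspec : ∀ x ∈ spectrum 𝕜 a, ‖x‖ ≤ ‖a‖ := fun _ ↦ norm_le_norm_of_mem_spectrum_of_predicate ha
  have hspec_ball : ∀ x ∈ spectrum 𝕜 a, x ∈ Metric.ball 0 δ := fun x hx ↦
    mem_ball_zero_iff.mpr ((hspec x hx).trans_lt (mem_ball_zero_iff.mp ha_ball))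
  have hfc : ContinuousOn f (spectrum 𝕜 a) := fun x hx ↦
    (hball x (hspec_ball x hx)).1.continuousWithinAt
  have hremainder : cfc f a - cfc f (0 : A) - (f' • ContinuousLinearMap.id 𝕜 A) (a - 0) =
      cfc (fun x ↦ f x - f 0 - f' * x) a := by
    rw [cfc_sub (fun x ↦ f x - f 0) (f' * ·) a, cfc_sub f (fun _ ↦ f 0) a, cfc_const (f 0) a,
      cfc_const_mul_id f' a, cfc_apply_zero, sub_zero]
    rfl
  rw [hremainder, sub_zero]
  refine norm_cfc_le (by positivity) fun x hx ↦ ?_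
  calc ‖f x - f 0 - f' * x‖ ≤ ε * ‖x‖ := by
        simpa [mul_comm] using (hball x (hspec_ball x hx)).2
    _ ≤ ε * ‖a‖ := by gcongr; exact hspec x hx

end FunctionalCalculus

section InvSqrtOnePlus

lemma hasDerivAt_one_add_rpow_zero (r : ℝ) : HasDerivAt (fun x : ℝ ↦ (1 + x) ^ r) r 0 := by
  simpa using ((hasDerivAt_id (0 : ℝ)).const_add 1).rpow_const (p := r) (Or.inl (by simp))

lemma eventually_continuousAt_one_add_rpow (r : ℝ) :
    ∀ᶠ x : ℝ in 𝓝 0, ContinuousAt (fun x : ℝ ↦ (1 + x) ^ r) x := by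
  have hne : ∀ᶠ x : ℝ in 𝓝 0, 1 + x ≠ 0 :=
    (continuous_const.add continuous_id).continuousAt.eventually_ne (by simp)
  filter_upwards [hne] with x hx
  exact (continuousAt_const.add continuousAt_id).rpow_const (Or.inl hx)

variable {K E : Type*} [NormedAddCommGroup K] [InnerProductSpace ℂ K] [CompleteSpace K]
  [NormedAddCommGroup E] [NormedSpace ℂ E]

lemma invSqrtOnePlus_zero : invSqrtOnePlus (0 : K →L[ℂ] K) = 1 := by
  simp [invSqrtOnePlus]

lemma hasDerivAt_invSqrtOnePlus_smul {S : K →L[ℂ] K} (hS : IsSelfAdjoint S) :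
    HasDerivAt (fun h : ℝ ↦ invSqrtOnePlus ((h : ℂ) • S)) (-((2 : ℂ)⁻¹ • S)) 0 := by
  have hline : HasDerivAt (fun h : ℝ ↦ h • S) S 0 := by
    simpa using (hasDerivAt_id (0 : ℝ)).smul_const S
  have hcfc := hasFDerivWithinAt_cfc_zero (A := K →L[ℂ] K)
    (hasDerivAt_one_add_rpow_zero (-(1 / 2))) (eventually_continuousAt_one_add_rpow _)
  rw [← zero_smul ℝ S] at hcfc
  have hderiv := hcfc.comp_hasDerivAt 0 hline (.of_forall fun h ↦ .smul (.all h) hS)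
  have hval : (-(1 / 2 : ℝ) • ContinuousLinearMap.id ℝ (K →L[ℂ] K)) S = -((2 : ℂ)⁻¹ • S) := by
    ext v
    simp [← Complex.coe_smul]
  rw [hval] at hderiv
  exact hderiv

lemma tendsto_inv_smul_invSqrtOnePlus_smul_sub_one {S : K →L[ℂ] K} (hS : IsSelfAdjoint S) :
    Tendsto (fun h : ℝ ↦ (h : ℂ)⁻¹ • (invSqrtOnePlus ((h : ℂ) • S) - 1)) (𝓝[≠] 0)
      (𝓝 (-((2 : ℂ)⁻¹ • S))) := by
  simpa [invSqrtOnePlus_zero, ← Complex.ofReal_inv] using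
    (hasDerivAt_invSqrtOnePlus_smul hS).tendsto_slope_zero

lemma tendsto_invSqrtOnePlus_smul {S : K →L[ℂ] K} (hS : IsSelfAdjoint S) :
    Tendsto (fun h : ℝ ↦ invSqrtOnePlus ((h : ℂ) • S)) (𝓝 0) (𝓝 1) := by
  simpa [invSqrtOnePlus_zero] using (hasDerivAt_invSqrtOnePlus_smul hS).continuousAt.tendsto

lemma tendsto_comp_invSqrtOnePlus_smul (T : K →L[ℂ] E) {S : K →L[ℂ] K} (hS : IsSelfAdjoint S) :
    Tendsto (fun h : ℝ ↦ T ∘L invSqrtOnePlus ((h : ℂ) • S)) (𝓝 0) (𝓝 T) :=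
  ((continuous_const.clm_comp continuous_id).tendsto' 1 T T.comp_id).comp
    (tendsto_invSqrtOnePlus_smul hS)

end InvSqrtOnePlus

section BlockOperators

lemma tendsto_const_comp_comp_const {𝕜 X Y Z W ι : Type*} [NontriviallyNormedField 𝕜]
    [NormedAddCommGroup X] [NormedSpace 𝕜 X] [NormedAddCommGroup Y] [NormedSpace 𝕜 Y]
    [NormedAddCommGroup Z] [NormedSpace 𝕜 Z] [NormedAddCommGroup W] [NormedSpace 𝕜 W]
    (P : Z →L[𝕜] W) (Q : X →L[𝕜] Y) {l : Filter ι} {T : ι → Y →L[𝕜] Z} {T₀ : Y →L[𝕜] Z}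
    (hT : Tendsto T l (𝓝 T₀)) : Tendsto (fun i ↦ P ∘L T i ∘L Q) l (𝓝 (P ∘L T₀ ∘L Q)) :=
  ((continuous_const.clm_comp (continuous_id.clm_comp continuous_const)).tendsto T₀).comp hT

variable {E F : Type*} [NormedAddCommGroup E] [InnerProductSpace ℂ E]
  [NormedAddCommGroup F] [InnerProductSpace ℂ F]

lemma blk_apply (A : E →L[ℂ] E) (C : F →L[ℂ] E) (B : E →L[ℂ] F) (D : F →L[ℂ] F)
    (v : WithLp 2 (E × F)) :
    blk A C B D v = WithLp.toLp 2 (A v.fst + C v.snd, B v.fst + D v.snd) := by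
  apply (WithLp.prodContinuousLinearEquiv 2 ℂ E F).injective
  simp [blk, inl0, inr1, fst0, snd1, add_assoc]

lemma projR_eq_blk : (projR : WithLp 2 (E × F) →L[ℂ] _) = blk 0 0 0 1 := by
  simp [projR, blk, ContinuousLinearMap.one_def]

lemma one_eq_blk : (1 : WithLp 2 (E × F) →L[ℂ] WithLp 2 (E × F)) = blk 1 0 0 1 := by
  ext1 v
  simp only [blk_apply, one_apply_eq_self, zero_apply, add_zero, zero_add]
  rfl

lemma blk_sub_blk (A A' : E →L[ℂ] E) (C C' : F →L[ℂ] E) (B B' : E →L[ℂ] F) (D D' : F →L[ℂ] F) :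
    blk A C B D - blk A' C' B' D' = blk (A - A') (C - C') (B - B') (D - D') := by
  simp only [blk, ContinuousLinearMap.comp_sub, ContinuousLinearMap.sub_comp]
  abel

lemma blk_mul_blk (A A' : E →L[ℂ] E) (C C' : F →L[ℂ] E) (B B' : E →L[ℂ] F) (D D' : F →L[ℂ] F) :
    blk A C B D * blk A' C' B' D' =
      blk (A ∘L A' + C ∘L B') (A ∘L C' + C ∘L D') (B ∘L A' + D ∘L B') (B ∘L C' + D ∘L D') := by
  ext v
  simp only [mul_apply_eq_comp, blk_apply]
  congr 2 <;>
  · simp only [add_apply, ContinuousLinearMap.comp_apply, WithLp.toLp_fst, WithLp.toLp_snd,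
      map_add]
    abel

lemma scaleOp_eq_blk (h : ℝ) :
    (scaleOp h : WithLp 2 (E × F) →L[ℂ] _) = blk ((√h : ℂ)⁻¹ • 1) 0 0 1 := by
  ext1 v
  refine WithLp.ofLp_injective 2 ?_
  simp [scaleOp, projR_eq_blk, one_eq_blk, blk_sub_blk, blk_apply]

lemma scal_blk {h : ℝ} (hh : 0 ≤ h) (A : E →L[ℂ] E) (C : F →L[ℂ] E) (B : E →L[ℂ] F)
    (D : F →L[ℂ] F) :
    scal h (blk A C B D) = blk ((h : ℂ)⁻¹ • A) ((√h : ℂ)⁻¹ • C) ((√h : ℂ)⁻¹ • B) D := by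
  have hsqrt : (√h : ℂ)⁻¹ * (√h : ℂ)⁻¹ = (h : ℂ)⁻¹ := by
    rw [← mul_inv, ← Complex.ofReal_mul, Real.mul_self_sqrt hh]
  simp [scal, scaleOp_eq_blk, blk_mul_blk, ContinuousLinearMap.one_def, smul_smul, hsqrt]

lemma tendsto_blk {ι : Type*} {l : Filter ι} {A : ι → E →L[ℂ] E} {C : ι → F →L[ℂ] E}
    {B : ι → E →L[ℂ] F} {D : ι → F →L[ℂ] F} {A₀ : E →L[ℂ] E} {C₀ : F →L[ℂ] E} {B₀ : E →L[ℂ] F}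
    {D₀ : F →L[ℂ] F} (hA : Tendsto A l (𝓝 A₀)) (hC : Tendsto C l (𝓝 C₀))
    (hB : Tendsto B l (𝓝 B₀)) (hD : Tendsto D l (𝓝 D₀)) :
    Tendsto (fun i ↦ blk (A i) (C i) (B i) (D i)) l (𝓝 (blk A₀ C₀ B₀ D₀)) := by
  unfold blk
  exact (((tendsto_const_comp_comp_const _ _ hA).add (tendsto_const_comp_comp_const _ _ hC)).add
    (tendsto_const_comp_comp_const _ _ hB)).add (tendsto_const_comp_comp_const _ _ hD)

end BlockOperators

lemma FZLW_zero_one (L : H₀ →L[ℂ] H₁) :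
    FZLW 0 L 1 = blk (-((2 : ℂ)⁻¹ • (adjoint L ∘L L))) (-adjoint L) L 0 := by
  simp [FZLW, ContinuousLinearMap.one_def]

lemma scal_VLh_sub_one {h : ℝ} (hh : 0 < h) (L : H₀ →L[ℂ] H₁) :
    scal h (VLh h L - 1) =
      blk ((h : ℂ)⁻¹ • (invSqrtOnePlus ((h : ℂ) • (adjoint L ∘L L)) - 1))
        (-(adjoint L ∘L invSqrtOnePlus ((h : ℂ) • (L ∘L adjoint L))))
        (L ∘L invSqrtOnePlus ((h : ℂ) • (adjoint L ∘L L)))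
        (invSqrtOnePlus ((h : ℂ) • (L ∘L adjoint L)) - 1) := by
  have hsqrt : (√h : ℂ) ≠ 0 := Complex.ofReal_ne_zero.mpr (Real.sqrt_ne_zero'.mpr hh)
  simp only [VLh, one_eq_blk, blk_sub_blk, scal_blk hh.le, sub_zero, smul_neg,
    inv_smul_smul₀ hsqrt]

theorem scaled_VLh_tendsto_F0LI (L : H₀ →L[ℂ] H₁) :
    Tendsto (fun h : ℝ => ‖scal h (VLh h L - 1) - FZLW 0 L 1‖) (𝓝[>] 0) (𝓝 0) ∧
    Tendsto (fun h : ℝ =>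
        ‖(h : ℂ)⁻¹ • (invSqrtOnePlus ((h : ℂ) • (adjoint L ∘L L)) - 1) -
          (-((2 : ℂ)⁻¹ • (adjoint L ∘L L)))‖) (𝓝[>] 0) (𝓝 0) ∧
    Tendsto (fun h : ℝ =>
        ‖L ∘L invSqrtOnePlus ((h : ℂ) • (adjoint L ∘L L)) - L‖) (𝓝[>] 0) (𝓝 0) ∧
    Tendsto (fun h : ℝ =>
        ‖adjoint L ∘L invSqrtOnePlus ((h : ℂ) • (L ∘L adjoint L)) - adjoint L‖)
      (𝓝[>] 0) (𝓝 0) ∧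
    Tendsto (fun h : ℝ =>
        ‖invSqrtOnePlus ((h : ℂ) • (L ∘L adjoint L)) - 1‖) (𝓝[>] 0) (𝓝 0) := by
  have hLL : IsSelfAdjoint (adjoint L ∘L L) := (isPositive_adjoint_comp_self L).isSelfAdjoint
  have hLL' : IsSelfAdjoint (L ∘L adjoint L) := (isPositive_self_comp_adjoint L).isSelfAdjoint
  have hA := (tendsto_inv_smul_invSqrtOnePlus_smul_sub_one hLL).mono_left (nhdsGT_le_nhdsNE 0)
  have hle : 𝓝[>] (0 : ℝ) ≤ 𝓝 0 := nhdsWithin_le_nhds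
  have hB := (tendsto_comp_invSqrtOnePlus_smul L hLL).mono_left hle
  have hC := (tendsto_comp_invSqrtOnePlus_smul (adjoint L) hLL').mono_left hle
  have hD := (tendsto_invSqrtOnePlus_smul hLL').mono_left hle
  simp only [← tendsto_iff_norm_sub_tendsto_zero]
  refine ⟨?_, hA, hB, hC, hD⟩
  rw [FZLW_zero_one]
  refine (tendsto_blk hA hC.neg hB (by simpa using hD.sub_const 1)).congr' ?_
  filter_upwards [self_mem_nhdsWithin] with h hh using (scal_VLh_sub_one hh L).symm
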